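/- arXiv:2203.13942 — 2 statements merged into one kernel-verified Lean document; each statement's English description precedes it below -/
import Mathlib

section
/- Let f : ℝ → ℝ and let p₊ and p₋ be real polynomials. Define g(x) = f(x) − H(x)p₊(x) − H(−x)p₋(x), where H is the Heaviside step function, and suppose g is of bounded variation on ℝ (finite total variation over ℝ) with lim_{|x|→∞} g(x) = 0. Then the improper integral ĝ(s) = lim_{X→−∞, Y→∞} ∫_X^Y e^{-ist} g(t) dt exists for each s ≠ 0, and for each x ∈ ℝ, (f(x−)+f(x+))/2 = (1/(2π)) · lim_{T→∞, S→0⁺} ∫_{S<|s|<T} e^{ixs} ĝ(s) ds + H(x)p₊(x) + H(−x)p₋(x), where the double limit means: for every ε > 0 there exist M > 0 and η > 0 such that the stated quantity is within ε whenever T > M and 0 < S < η. -/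
/-- The Heaviside step function: `1` for positive argument, `1/2` at `0`, `0` otherwise. -/
noncomputable def heaviside (x : ℝ) : ℝ :=
  if 0 < x then 1 else if x = 0 then 1/2 else 0

open MeasureTheory Filter Set Topology

/-- A bounded monotone function has finite limits at both ends of the real line. -/
lemma exists_tendsto_of_monotone_of_abs_le {p : ℝ → ℝ} (hp : Monotone p) {C : ℝ}
    (hC : ∀ x, |p x| ≤ C) :
    (∃ l, Tendsto p atBot (𝓝 l)) ∧ ∃ u, Tendsto p atTop (𝓝 u) :=
  ⟨⟨_, tendsto_atBot_ciInf hp ⟨-C, by rintro _ ⟨x, rfl⟩; exact (abs_le.1 (hC x)).1⟩⟩,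
    ⟨_, tendsto_atTop_ciSup hp ⟨C, by rintro _ ⟨x, rfl⟩; exact (abs_le.1 (hC x)).2⟩⟩⟩

/-- A function of bounded variation vanishing at `±∞` is, up to a null set, the distribution
function of a difference of two finite measures of equal mass. -/
lemma exists_measures_of_boundedVariationOn {g : ℝ → ℝ} (hg : BoundedVariationOn g univ)
    (htop : Tendsto g atTop (𝓝 0)) (hbot : Tendsto g atBot (𝓝 0)) :
    ∃ μ ν : Measure ℝ, IsFiniteMeasure μ ∧ IsFiniteMeasure ν ∧ μ.real univ = ν.real univ ∧
      (∀ᵐ t, g t = μ.real (Iio t) - ν.real (Iio t)) ∧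
      (∀ x l, Tendsto g (𝓝[<] x) (𝓝 l) → l = μ.real (Iio x) - ν.real (Iio x)) ∧
      ∀ x r, Tendsto g (𝓝[>] x) (𝓝 r) → r = μ.real (Iic x) - ν.real (Iic x) := by
  obtain ⟨p, q, hp, hq, hpq, hv⟩ :=
    hg.locallyBoundedVariationOn.exists_monotoneOn_sub_monotoneOn'
  rw [monotoneOn_univ] at hp hq
  have hgx : ∀ x, g x = p x - q x := fun x => congrFun hpq x
  obtain ⟨C, hC⟩ : ∃ C : ℝ, ∀ x, |p x| ≤ C ∧ |q x| ≤ C := by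
    refine ⟨|p 0| + |q 0| + (eVariationOn g univ).toReal, fun x => ?_⟩
    have h1 := hv 0 (mem_univ _) x (mem_univ _)
    have h2 := variationOnFromTo.abs_le_eVariationOn hg (a := 0) (b := x)
    have h3 := hg.dist_le (mem_univ x) (mem_univ 0)
    rw [Real.dist_eq, hgx, hgx] at h3
    rw [← h1] at h2
    rw [abs_le] at h2 h3
    have := neg_abs_le (p 0)
    have := le_abs_self (p 0)
    have := neg_abs_le (q 0)
    have := le_abs_self (q 0)
    constructor <;> rw [abs_le] <;> constructor <;> linarith
  obtain ⟨⟨lp, hlp⟩, up, hup⟩ := exists_tendsto_of_monotone_of_abs_le hp fun x => (hC x).1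
  obtain ⟨⟨lq, hlq⟩, uq, huq⟩ := exists_tendsto_of_monotone_of_abs_le hq fun x => (hC x).2
  have hu : up = uq := by
    have := tendsto_nhds_unique htop ((hup.sub huq).congr fun x => (hgx x).symm)
    linarith
  have hl : lp = lq := by
    have := tendsto_nhds_unique hbot ((hlp.sub hlq).congr fun x => (hgx x).symm)
    linarith
  subst hu hl
  have key : ∀ {p : ℝ → ℝ} (hp : Monotone p), Tendsto p atBot (𝓝 lp) → Tendsto p atTop (𝓝 up) →
      IsFiniteMeasure hp.stieltjesFunction.measure ∧
      hp.stieltjesFunction.measure.real univ = up - lp ∧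
      (∀ x, hp.stieltjesFunction.measure.real (Iic x) = Function.rightLim p x - lp) ∧
      (∀ x, hp.stieltjesFunction.measure.real (Iio x) = Function.leftLim p x - lp) ∧
      ∀ᵐ x, Function.leftLim p x = p x := by
    intro p hp h1 h2
    have h1' : Tendsto hp.stieltjesFunction atBot (𝓝 lp) := tendsto_rightLim_atBot_of_tendsto h1
    have h2' : Tendsto hp.stieltjesFunction atTop (𝓝 up) := tendsto_rightLim_atTop_of_tendsto h2
    have hle : ∀ x, lp ≤ p x := fun x => hp.le_of_tendsto h1 x
    have hge : ∀ x, p x ≤ up := fun x => hp.ge_of_tendsto h2 x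
    have hlim : ∀ x, Function.leftLim hp.stieltjesFunction x = Function.leftLim p x := fun x =>
      leftLim_rightLim (hp.tendsto_leftLim x)
    refine ⟨hp.stieltjesFunction.isFiniteMeasure h1' h2', ?_, fun x => ?_, fun x => ?_, ?_⟩
    · rw [measureReal_def, hp.stieltjesFunction.measure_univ h1' h2', ENNReal.toReal_ofReal]
      linarith [hle 0, hge 0]
    · rw [measureReal_def, hp.stieltjesFunction.measure_Iic h1', ENNReal.toReal_ofReal,
        hp.stieltjesFunction_eq]
      rw [hp.stieltjesFunction_eq]
      linarith [hle x, hp.le_rightLim le_rfl (x := x)]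
    · rw [measureReal_def, hp.stieltjesFunction.measure_Iio h1', ENNReal.toReal_ofReal, hlim]
      rw [hlim]
      linarith [hle (x - 1), hp.le_leftLim (sub_one_lt x)]
    · filter_upwards [hp.countable_not_continuousAt.ae_notMem volume] with x hx
      exact (not_not.1 hx).continuousWithinAt.leftLim_eq
  obtain ⟨p1, p2, p3, p4, p5⟩ := key hp hlp hup
  obtain ⟨q1, q2, q3, q4, q5⟩ := key hq hlq huq
  refine ⟨_, _, p1, q1, p2.trans q2.symm, ?_, fun x l hx => ?_, fun x r hx => ?_⟩
  · filter_upwards [p5, q5] with x hx hx'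
    rw [p4, q4, hx, hx', hgx]
    ring
  · rw [p4, q4, tendsto_nhds_unique hx
      (((hp.tendsto_leftLim x).sub (hq.tendsto_leftLim x)).congr fun x => (hgx x).symm)]
    ring
  · rw [p3, q3, tendsto_nhds_unique hx
      (((hp.tendsto_rightLim x).sub (hq.tendsto_rightLim x)).congr fun x => (hgx x).symm)]
    ring

/-- The sine integral as a Laplace-type integral. -/
lemma integral_sinc_eq {T : ℝ} (hT : 0 < T) : ∫ s in (0:ℝ)..T, Real.sinc s =
    ∫ u in Ioi (0:ℝ), (1 - Real.exp (-(u * T)) * (Real.cos T + u * Real.sin T)) / (1 + u ^ 2) := by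
  have hint : Integrable (Function.uncurry fun s u : ℝ => Real.exp (-(u * s)) * Real.sin s)
      ((volume.restrict (Ioc 0 T)).prod (volume.restrict (Ioi 0))) := by
    rw [integrable_prod_iff (by
      apply Continuous.aestronglyMeasurable
      simp only [Function.uncurry_def]
      fun_prop)]
    constructor
    · filter_upwards [ae_restrict_mem measurableSet_Ioc] with s hs
      have := (integrableOn_exp_mul_Ioi (a := -s) (by linarith [hs.1]) 0).mul_const (Real.sin s)
      refine this.congr (ae_of_all _ fun u => ?_)
      simp only [Function.uncurry]
      ring_nf
    · refine Integrable.congr (f := fun s => |Real.sinc s|) ?_ ?_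
      · exact (Real.continuous_sinc.abs.integrableOn_Icc).mono_set Ioc_subset_Icc_self
      · filter_upwards [ae_restrict_mem measurableSet_Ioc] with s hs
        have h := integral_exp_mul_Ioi (a := -s) (by linarith [hs.1]) 0
        simp only [Function.uncurry, norm_mul, Real.norm_eq_abs, Real.abs_exp]
        rw [integral_mul_const, Real.sinc_of_ne_zero hs.1.ne', abs_div, abs_of_pos hs.1]
        have : ∀ u : ℝ, -(u * s) = -s * u := fun u => by ring
        simp_rw [this, h]
        simp
        ring
  have hswap := integral_integral_swap hint
  rw [intervalIntegral.integral_of_le hT.le]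
  refine Eq.trans (setIntegral_congr_fun measurableSet_Ioc fun s hs => ?_)
    (hswap.trans (setIntegral_congr_fun measurableSet_Ioi fun u hu => ?_))
  · have h := integral_exp_mul_Ioi (a := -s) (by linarith [hs.1]) 0
    rw [integral_mul_const, Real.sinc_of_ne_zero hs.1.ne']
    have : ∀ u : ℝ, -(u * s) = -s * u := fun u => by ring
    simp_rw [this, h]
    simp
    ring
  · rw [← intervalIntegral.integral_of_le hT.le]
    have hpos : (1 + u ^ 2) ≠ 0 := by positivity
    have hd : ∀ s : ℝ, HasDerivAt
        (fun s => (1 - Real.exp (-(u * s)) * (Real.cos s + u * Real.sin s)) / (1 + u ^ 2))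
        (Real.exp (-(u * s)) * Real.sin s) s := by
      intro s
      have h1 : HasDerivAt (fun s => Real.exp (-(u * s))) (Real.exp (-(u * s)) * (-(u * 1))) s :=
        (((hasDerivAt_id s).const_mul u).neg).exp
      have h2 := (Real.hasDerivAt_cos s).add ((Real.hasDerivAt_sin s).const_mul u)
      refine (((h1.mul h2).const_sub 1).div_const (1 + u ^ 2)).congr_deriv ?_
      simp only [Pi.add_apply]
      field_simp
      ring
    rw [intervalIntegral.integral_eq_sub_of_hasDerivAt (fun s _ => hd s)
      (Continuous.intervalIntegrable (by fun_prop) _ _)]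
    simp

lemma abs_integral_sinc_sub_le {T : ℝ} (hT : 0 < T) :
    |(∫ s in (0:ℝ)..T, Real.sinc s) - Real.pi / 2| ≤ 2 / T := by
  have hb : ∀ u : ℝ, ‖Real.exp (-(u * T)) * (Real.cos T + u * Real.sin T) / (1 + u ^ 2)‖ ≤
      2 * Real.exp (-T * u) := by
    intro u
    have hpos : (0:ℝ) < 1 + u ^ 2 := by positivity
    rw [Real.norm_eq_abs, abs_div, abs_mul, Real.abs_exp, abs_of_pos hpos, div_le_iff₀ hpos,
      show -(u * T) = -T * u by ring]
    have : |Real.cos T + u * Real.sin T| ≤ 2 * (1 + u ^ 2) := by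
      have h1 := Real.cos_sq_add_sin_sq T
      rw [abs_le]
      constructor <;>
        nlinarith [sq_nonneg (u - Real.sin T), sq_nonneg (u + Real.sin T),
          sq_nonneg (1 - Real.cos T), sq_nonneg (1 + Real.cos T), sq_nonneg (Real.sin T),
          sq_nonneg (Real.cos T)]
    nlinarith [Real.exp_pos (-T * u)]
  have hi := integrableOn_exp_mul_Ioi (a := -T) (by linarith) 0
  have hint : IntegrableOn
      (fun u => Real.exp (-(u * T)) * (Real.cos T + u * Real.sin T) / (1 + u ^ 2)) (Ioi 0) := by
    refine (hi.const_mul 2).mono' ?_ (ae_of_all _ hb)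
    apply Continuous.aestronglyMeasurable
    exact Continuous.div (by fun_prop) (by fun_prop) fun u => by positivity
  rw [integral_sinc_eq hT]
  have : ∀ u : ℝ, (1 - Real.exp (-(u * T)) * (Real.cos T + u * Real.sin T)) / (1 + u ^ 2) =
      (1 + u ^ 2)⁻¹ - Real.exp (-(u * T)) * (Real.cos T + u * Real.sin T) / (1 + u ^ 2) :=
    fun u => by ring
  simp_rw [this]
  rw [integral_sub integrable_inv_one_add_sq.integrableOn hint, integral_Ioi_inv_one_add_sq,
    Real.arctan_zero, sub_zero, sub_sub_cancel_left, abs_neg]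
  refine (norm_integral_le_of_norm_le (hi.const_mul 2) (ae_of_all _ hb)).trans_eq ?_
  rw [integral_const_mul, integral_exp_mul_Ioi (by linarith)]
  simp
  ring

/-- The Dirichlet integral. -/
lemma tendsto_integral_sinc_atTop :
    Tendsto (fun T => ∫ s in (0:ℝ)..T, Real.sinc s) atTop (𝓝 (Real.pi / 2)) := by
  rw [tendsto_iff_dist_tendsto_zero]
  refine squeeze_zero' (Eventually.of_forall fun _ => dist_nonneg) ?_
    (tendsto_const_nhds.div_atTop tendsto_id : Tendsto (fun T : ℝ => 2 / T) atTop (𝓝 0))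
  filter_upwards [eventually_gt_atTop 0] with T hT
  exact abs_integral_sinc_sub_le hT

lemma integral_sinc_neg (T : ℝ) :
    ∫ s in (0:ℝ)..(-T), Real.sinc s = -∫ s in (0:ℝ)..T, Real.sinc s := by
  have := intervalIntegral.integral_comp_neg (a := 0) (b := T) Real.sinc
  simp only [Real.sinc_neg, neg_zero] at this
  rw [this, intervalIntegral.integral_symm]

lemma abs_integral_sinc_le (T : ℝ) : |∫ s in (0:ℝ)..T, Real.sinc s| ≤ 4 := by
  have key : ∀ T : ℝ, 0 ≤ T → |∫ s in (0:ℝ)..T, Real.sinc s| ≤ 4 := by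
    intro T hT
    rcases le_or_gt T 1 with h | h
    · have := intervalIntegral.norm_integral_le_of_norm_le_const (a := 0) (b := T) (C := 1)
        (f := Real.sinc) fun x _ => Real.abs_sinc_le_one x
      rw [Real.norm_eq_abs, sub_zero, abs_of_nonneg hT] at this
      linarith
    · have h1 := abs_integral_sinc_sub_le (by linarith : 0 < T)
      have h2 : 2 / T ≤ 2 := by rw [div_le_iff₀ (by linarith)]; linarith
      have := Real.pi_pos
      have := Real.pi_le_four
      rw [abs_le] at h1 ⊢
      constructor <;> linarith
  rcases le_total 0 T with h | h
  · exact key T h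
  · rw [← neg_neg T, integral_sinc_neg, abs_neg]
    exact key _ (by linarith)

lemma integral_sin_mul_div {S T : ℝ} (hS : 0 < S) (hT : 0 < T) (y : ℝ) :
    ∫ s in S..T, Real.sin (s * y) / s =
      (∫ s in (0:ℝ)..(T * y), Real.sinc s) - ∫ s in (0:ℝ)..(S * y), Real.sinc s := by
  have hc : ∀ a b, IntervalIntegrable Real.sinc volume a b :=
    fun a b => Real.continuous_sinc.intervalIntegrable a b
  rw [intervalIntegral.integral_interval_sub_left (hc _ _) (hc _ _),
    ← intervalIntegral.smul_integral_comp_mul_right, ← intervalIntegral.integral_smul]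
  refine intervalIntegral.integral_congr fun s hs => ?_
  have hs0 : 0 < s := (lt_min hS hT).trans_le hs.1
  rcases eq_or_ne y 0 with rfl | hy
  · simp
  · simp only [smul_eq_mul]
    rw [Real.sinc_of_ne_zero (by positivity)]
    field_simp

lemma tendsto_integral_sin_mul_div (y : ℝ) :
    Tendsto (fun P : ℝ × ℝ => ∫ s in P.2..P.1, Real.sin (s * y) / s) (atTop ×ˢ 𝓝[>] 0)
      (𝓝 (Real.pi / 2 * SignType.sign y)) := by
  have hT : Tendsto (fun T : ℝ => ∫ s in (0:ℝ)..(T * y), Real.sinc s) atTop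
      (𝓝 (Real.pi / 2 * SignType.sign y)) := by
    rcases lt_trichotomy y 0 with hy | rfl | hy
    · have := (tendsto_integral_sinc_atTop.comp
        (tendsto_id.atTop_mul_const (neg_pos.2 hy))).neg
      rw [sign_neg hy]
      simp only [SignType.coe_neg_one, mul_neg, mul_one]
      refine this.congr fun T => ?_
      simp [← integral_sinc_neg]
    · simp
    · rw [sign_pos hy]
      simpa [Function.comp_def] using
        tendsto_integral_sinc_atTop.comp (tendsto_id.atTop_mul_const hy)
  have hS : Tendsto (fun S : ℝ => ∫ s in (0:ℝ)..(S * y), Real.sinc s) (𝓝[>] 0) (𝓝 0) := by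
    have : Continuous (fun S : ℝ => ∫ s in (0:ℝ)..(S * y), Real.sinc s) :=
      (intervalIntegral.continuous_primitive
        (fun a b => Real.continuous_sinc.intervalIntegrable a b) 0).comp (by fun_prop)
    simpa using (this.tendsto 0).mono_left nhdsWithin_le_nhds
  have := (hT.comp tendsto_fst).sub (hS.comp (tendsto_snd (f := (atTop : Filter ℝ))))
  rw [sub_zero] at this
  refine this.congr' ?_
  filter_upwards [(eventually_gt_atTop (0:ℝ)).prod_mk
    (self_mem_nhdsWithin (a := (0:ℝ)) (s := Ioi 0))] with P hP
  exact (integral_sin_mul_div hP.2 hP.1 y).symm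

lemma isFiniteMeasure_restrict_uIoc (a b : ℝ) :
    IsFiniteMeasure ((volume : Measure ℝ).restrict (uIoc a b)) :=
  inferInstanceAs (IsFiniteMeasure (volume.restrict (Ioc _ _)))

lemma norm_exp_neg_I_mul (s t : ℝ) : ‖Complex.exp (-(Complex.I * s * t))‖ = 1 := by
  simp [Complex.norm_exp]

lemma integral_exp_mul_measureReal_Iio (μ : Measure ℝ) [IsFiniteMeasure μ] {s X Y : ℝ}
    (hs : s ≠ 0) (hXY : X ≤ Y) :
    (∫ t in X..Y, Complex.exp (-(Complex.I * s * t)) * (μ.real (Iio t) : ℂ)) +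
        Complex.exp (-(Complex.I * s * Y)) / (Complex.I * s) * μ.real univ =
      ∫ y, Complex.exp (-(Complex.I * s * (max X (min y Y) : ℝ))) / (Complex.I * s) ∂μ := by
  set F : ℝ → ℝ → ℂ := fun t y =>
    (Ioi y).indicator (fun t : ℝ => Complex.exp (-(Complex.I * s * t))) t with hF
  have hmeas : Measurable (Function.uncurry F) := by
    have : Function.uncurry F = {z : ℝ × ℝ | z.2 < z.1}.indicator
        fun z => Complex.exp (-(Complex.I * s * z.1)) := by
      ext z
      simp [hF, Function.uncurry, indicator]
    rw [this]
    exact Measurable.indicator (by fun_prop) (measurableSet_lt measurable_snd measurable_fst)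
  have hint : Integrable (Function.uncurry F) ((volume.restrict (uIoc X Y)).prod μ) := by
    have := isFiniteMeasure_restrict_uIoc X Y
    refine Integrable.of_bound hmeas.aestronglyMeasurable 1 (ae_of_all _ fun z => ?_)
    exact (norm_indicator_le_norm_self (fun t : ℝ => Complex.exp (-(Complex.I * s * t))) z.1).trans
      (norm_exp_neg_I_mul s z.1).le
  have hleft : ∀ t : ℝ, Complex.exp (-(Complex.I * s * t)) * (μ.real (Iio t) : ℂ) =
      ∫ y, F t y ∂μ := by
    intro t
    have : F t = (Iio t).indicator fun _ => Complex.exp (-(Complex.I * s * t)) := by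
      ext y
      simp [hF, indicator]
    rw [this, integral_indicator_const _ measurableSet_Iio, Complex.real_smul, mul_comm]
  have hinner : ∀ y : ℝ, ∫ t in X..Y, F t y =
      Complex.exp (-(Complex.I * s * (max X (min y Y) : ℝ))) / (Complex.I * s) -
        Complex.exp (-(Complex.I * s * Y)) / (Complex.I * s) := by
    intro y
    have hset : Ioc X Y ∩ Ioi y = Ioc (max X (min y Y)) Y := by
      ext t
      simp only [mem_inter_iff, mem_Ioc, mem_Ioi]
      grind
    have hle : max X (min y Y) ≤ Y := max_le hXY (min_le_right _ _)
    rw [intervalIntegral.integral_of_le hXY, hF, setIntegral_indicator measurableSet_Ioi, hset,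
      ← intervalIntegral.integral_of_le hle]
    simp_rw [← neg_mul]
    rw [integral_exp_mul_complex (by simpa using hs)]
    field_simp
    ring
  simp_rw [hleft]
  rw [intervalIntegral_integral_swap hint]
  simp_rw [hinner]
  rw [integral_sub _ (integrable_const _), integral_const, Complex.real_smul,
    mul_comm (μ.real univ : ℂ), sub_add_cancel]
  refine Integrable.of_bound (Continuous.aestronglyMeasurable (by fun_prop))
    ‖(Complex.I * s)⁻¹‖ (ae_of_all _ fun y => ?_)
  rw [div_eq_mul_inv, norm_mul, norm_exp_neg_I_mul, one_mul]

/-- Truncated Fourier integrals of the distribution function of a finite measure, corrected by the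
boundary term coming from its total mass. -/
lemma tendsto_integral_exp_mul_measureReal_Iio (μ : Measure ℝ) [IsFiniteMeasure μ] {s : ℝ}
    (hs : s ≠ 0) :
    Tendsto (fun P : ℝ × ℝ =>
      (∫ t in P.1..P.2, Complex.exp (-(Complex.I * s * t)) * (μ.real (Iio t) : ℂ)) +
        Complex.exp (-(Complex.I * s * P.2)) / (Complex.I * s) * μ.real univ)
      (atBot ×ˢ atTop) (𝓝 (charFun μ (-s) / (Complex.I * s))) := by
  have hlim : Tendsto (fun P : ℝ × ℝ =>
      ∫ y, Complex.exp (-(Complex.I * s * (max P.1 (min y P.2) : ℝ))) / (Complex.I * s) ∂μ)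
      (atBot ×ˢ atTop) (𝓝 (∫ y, Complex.exp (-(Complex.I * s * y)) / (Complex.I * s) ∂μ)) := by
    refine tendsto_integral_filter_of_dominated_convergence (fun _ => ‖(Complex.I * s)⁻¹‖)
      (Eventually.of_forall fun P => Continuous.aestronglyMeasurable (by fun_prop))
      (Eventually.of_forall fun P => ae_of_all _ fun y => ?_) (integrable_const _)
      (ae_of_all _ fun y => ?_)
    · rw [div_eq_mul_inv, norm_mul, norm_exp_neg_I_mul, one_mul]
    · refine tendsto_const_nhds.congr' ?_
      filter_upwards [(eventually_le_atBot y).prod_mk (eventually_ge_atTop y)] with P hP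
      rw [min_eq_left hP.2, max_eq_right hP.1]
  have hval : ∫ y, Complex.exp (-(Complex.I * s * y)) / (Complex.I * s) ∂μ =
      charFun μ (-s) / (Complex.I * s) := by
    rw [integral_div, charFun_apply_real]
    congr 2
    ext y
    push_cast
    ring_nf
  rw [hval] at hlim
  refine hlim.congr' ?_
  filter_upwards [(eventually_le_atBot (0:ℝ)).prod_mk (eventually_ge_atTop (0:ℝ))] with P hP
  exact (integral_exp_mul_measureReal_Iio μ hs (hP.1.trans hP.2)).symm

lemma intervalIntegrable_exp_mul_charFun_div (μ : Measure ℝ) [IsFiniteMeasure μ] (x : ℝ)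
    {a b : ℝ} (h : (0:ℝ) ∉ uIcc a b) :
    IntervalIntegrable
      (fun s : ℝ => Complex.exp (Complex.I * x * s) * (charFun μ (-s) / (Complex.I * s)))
      volume a b := by
  refine ContinuousOn.intervalIntegrable ?_
  have : Continuous fun s : ℝ => charFun μ (-s) := continuous_charFun.comp continuous_neg
  refine ContinuousOn.mul (by fun_prop) (ContinuousOn.div this.continuousOn (by fun_prop) ?_)
  intro s hs
  have : s ≠ 0 := fun h0 => h (h0 ▸ hs)
  simp [this]

lemma exp_mul_charFun_add_neg (μ : Measure ℝ) [IsFiniteMeasure μ] (x : ℝ) {s : ℝ} (hs : s ≠ 0) :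
    Complex.exp (Complex.I * x * (-s : ℝ)) * (charFun μ (- -s) / (Complex.I * (-s : ℝ))) +
        Complex.exp (Complex.I * x * s) * (charFun μ (-s) / (Complex.I * s)) =
      ∫ y, ((2 * (Real.sin (s * (x - y)) / s) : ℝ) : ℂ) ∂μ := by
  have hb : ∀ r : ℝ, Integrable (fun y : ℝ => Complex.exp (r * y * Complex.I)) μ := fun r =>
    Integrable.of_bound (Continuous.aestronglyMeasurable (by fun_prop)) 1
      (ae_of_all _ fun y => by simp [Complex.norm_exp])
  have h1 := (hb s).const_mul (Complex.exp (Complex.I * x * (-s : ℝ)) / (Complex.I * (-s : ℝ)))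
  have h2 := (hb (-s)).const_mul (Complex.exp (Complex.I * x * s) / (Complex.I * s))
  rw [neg_neg, charFun_apply_real, charFun_apply_real, ← mul_div_assoc, ← mul_div_assoc,
    mul_div_right_comm, mul_div_right_comm, ← integral_const_mul, ← integral_const_mul,
    ← integral_add h1 h2]
  refine integral_congr_ae (ae_of_all _ fun y => ?_)
  have hs' : (s : ℂ) ≠ 0 := by exact_mod_cast hs
  have e1 : Complex.exp (Complex.I * x * (-s : ℝ)) * Complex.exp (s * y * Complex.I) =
      Complex.exp (-(s * (x - y)) * Complex.I) := by
    rw [← Complex.exp_add]; push_cast; ring_nf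
  have e2 : Complex.exp (Complex.I * x * s) * Complex.exp ((-s : ℝ) * y * Complex.I) =
      Complex.exp ((s * (x - y)) * Complex.I) := by
    rw [← Complex.exp_add]; push_cast; ring_nf
  simp only
  rw [div_mul_eq_mul_div, div_mul_eq_mul_div, e1, e2]
  push_cast
  rw [Complex.sin]
  field_simp
  rw [Complex.I_sq]
  ring

lemma integral_exp_mul_charFun_div (μ : Measure ℝ) [IsFiniteMeasure μ] (x : ℝ) {S T : ℝ}
    (hS : 0 < S) (hT : 0 < T) :
    (∫ s in (-T)..(-S), Complex.exp (Complex.I * x * s) * (charFun μ (-s) / (Complex.I * s))) +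
        ∫ s in S..T, Complex.exp (Complex.I * x * s) * (charFun μ (-s) / (Complex.I * s)) =
      ∫ y, ((2 * ∫ s in S..T, Real.sin (s * (x - y)) / s : ℝ) : ℂ) ∂μ := by
  have hpos : ∀ s ∈ uIcc S T, 0 < s := fun s hs => (lt_min hS hT).trans_le hs.1
  have hi := intervalIntegrable_exp_mul_charFun_div μ x (a := S) (b := T)
    fun h => lt_irrefl _ (hpos 0 h)
  have hi' := intervalIntegrable_exp_mul_charFun_div μ x (a := -S) (b := -T) fun h => by
    rw [mem_uIcc] at h
    rcases h with h | h <;> linarith [h.1, h.2]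
  have hi'' := (IntervalIntegrable.iff_comp_neg enorm_ne_top).1 hi'
  rw [neg_neg, neg_neg] at hi''
  rw [← intervalIntegral.integral_comp_neg (fun s : ℝ =>
      Complex.exp (Complex.I * x * s) * (charFun μ (-s) / (Complex.I * s))),
    ← intervalIntegral.integral_add hi'' hi]
  have hF : Integrable
      (Function.uncurry fun s y : ℝ => ((2 * (Real.sin (s * (x - y)) / s) : ℝ) : ℂ))
      ((volume.restrict (uIoc S T)).prod μ) := by
    have := isFiniteMeasure_restrict_uIoc S T
    refine Integrable.of_bound (Measurable.aestronglyMeasurable ?_) (2 / min S T) ?_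
    · simp only [Function.uncurry_def]
      fun_prop
    · have : ∀ᵐ z ∂((volume.restrict (uIoc S T)).prod μ), z.1 ∈ uIoc S T :=
        Measure.quasiMeasurePreserving_fst.ae (ae_restrict_mem measurableSet_uIoc)
      filter_upwards [this] with z hz
      have hm := lt_min hS hT
      simp only [Function.uncurry, Complex.norm_real, Real.norm_eq_abs]
      rw [abs_mul, abs_two, abs_div, abs_of_pos (hm.trans hz.1), mul_div_assoc']
      have := Real.abs_sin_le_one (z.1 * (x - z.2))
      gcongr
      · linarith
      · exact hz.1.le
  have hR : ∀ y, ((2 * ∫ s in S..T, Real.sin (s * (x - y)) / s : ℝ) : ℂ) =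
      ∫ s in S..T, ((2 * (Real.sin (s * (x - y)) / s) : ℝ) : ℂ) := by
    intro y
    rw [intervalIntegral.integral_ofReal, intervalIntegral.integral_const_mul]
  simp_rw [hR]
  rw [← intervalIntegral_integral_swap hF]
  exact intervalIntegral.integral_congr fun s hs => exp_mul_charFun_add_neg μ x (hpos s hs).ne'

lemma integral_sign_sub (μ : Measure ℝ) [IsFiniteMeasure μ] (x : ℝ) :
    ∫ y, ((SignType.sign (x - y) : ℝ)) ∂μ = μ.real (Iio x) - μ.real (Ioi x) := by
  have : (fun y => (SignType.sign (x - y) : ℝ)) =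
      fun y => (Iio x).indicator 1 y - (Ioi x).indicator 1 y := by
    ext y
    rcases lt_trichotomy y x with h | rfl | h
    · simp [sign_pos (sub_pos.2 h), h, h.le]
    · simp
    · simp [sign_neg (sub_neg.2 h), h, h.le]
  rw [this, integral_sub, integral_indicator_one measurableSet_Iio,
    integral_indicator_one measurableSet_Ioi]
  · exact (integrable_const 1).indicator measurableSet_Iio
  · exact (integrable_const 1).indicator measurableSet_Ioi

/-- Lévy-type inversion for a finite measure on the real line. -/
lemma tendsto_integral_exp_mul_charFun_div (μ : Measure ℝ) [IsFiniteMeasure μ] (x : ℝ) :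
    Tendsto (fun P : ℝ × ℝ =>
      (∫ s in (-P.1)..(-P.2),
        Complex.exp (Complex.I * x * s) * (charFun μ (-s) / (Complex.I * s))) +
      ∫ s in P.2..P.1, Complex.exp (Complex.I * x * s) * (charFun μ (-s) / (Complex.I * s)))
      (atTop ×ˢ 𝓝[>] 0)
      (𝓝 ((Real.pi * (μ.real (Iio x) - μ.real (Ioi x)) : ℝ) : ℂ)) := by
  have hpos : ∀ᶠ P : ℝ × ℝ in atTop ×ˢ 𝓝[>] 0, 0 < P.1 ∧ 0 < P.2 :=
    (eventually_gt_atTop (0:ℝ)).prod_mk self_mem_nhdsWithin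
  have hlim : Tendsto (fun P : ℝ × ℝ => ∫ y, (2 * ∫ s in P.2..P.1, Real.sin (s * (x - y)) / s) ∂μ)
      (atTop ×ˢ 𝓝[>] 0) (𝓝 (∫ y, 2 * (Real.pi / 2 * SignType.sign (x - y)) ∂μ)) := by
    refine tendsto_integral_filter_of_dominated_convergence (fun _ => 16) ?_ ?_
      (integrable_const _)
      (ae_of_all _ fun y => (tendsto_integral_sin_mul_div (x - y)).const_mul 2)
    · filter_upwards [hpos] with P hP
      have hc : Continuous fun T => ∫ s in (0:ℝ)..T, Real.sinc s :=
        intervalIntegral.continuous_primitive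
          (fun a b => Real.continuous_sinc.intervalIntegrable a b) 0
      simp_rw [integral_sin_mul_div hP.2 hP.1]
      apply Continuous.aestronglyMeasurable
      exact continuous_const.mul ((hc.comp (by fun_prop : Continuous fun y => P.1 * (x - y))).sub
        (hc.comp (by fun_prop : Continuous fun y => P.2 * (x - y))))
    · filter_upwards [hpos] with P hP
      refine ae_of_all _ fun y => ?_
      rw [integral_sin_mul_div hP.2 hP.1, Real.norm_eq_abs]
      have h1 := abs_le.1 (abs_integral_sinc_le (P.1 * (x - y)))
      have h2 := abs_le.1 (abs_integral_sinc_le (P.2 * (x - y)))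
      rw [abs_le]
      constructor <;> linarith [h1.1, h1.2, h2.1, h2.2]
  have hval : ∫ y, 2 * (Real.pi / 2 * (SignType.sign (x - y) : ℝ)) ∂μ =
      Real.pi * (μ.real (Iio x) - μ.real (Ioi x)) := by
    rw [integral_const_mul, integral_const_mul, integral_sign_sub]
    ring
  rw [hval] at hlim
  refine ((Complex.continuous_ofReal.tendsto _).comp hlim).congr' ?_
  filter_upwards [hpos] with P hP
  rw [integral_exp_mul_charFun_div μ x hP.2 hP.1, integral_complex_ofReal]
  rfl

lemma heaviside_neg (x : ℝ) : heaviside (-x) = 1 - heaviside x := by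
  unfold heaviside
  rcases lt_trichotomy x 0 with h | rfl | h
  · simp [h, h.ne, h.not_gt]
  · norm_num
  · simp [h, h.ne', h.not_gt]

lemma heaviside_of_pos {x : ℝ} (h : 0 < x) : heaviside x = 1 := if_pos h

lemma heaviside_of_neg {x : ℝ} (h : x < 0) : heaviside x = 0 := by
  simp [heaviside, h.not_gt, h.ne]

lemma tendsto_heaviside_of_ne {x : ℝ} (hx : x ≠ 0) :
    Tendsto heaviside (𝓝 x) (𝓝 (heaviside x)) := by
  refine tendsto_const_nhds.congr' ?_
  rcases hx.lt_or_gt with h | h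
  · filter_upwards [Iio_mem_nhds h] with t ht
    rw [heaviside_of_neg h, heaviside_of_neg ht]
  · filter_upwards [Ioi_mem_nhds h] with t ht
    rw [heaviside_of_pos h, heaviside_of_pos ht]

/-- The Heaviside function is the average of its one-sided limits. -/
lemma exists_tendsto_heaviside (x : ℝ) : ∃ a b : ℝ, Tendsto heaviside (𝓝[<] x) (𝓝 a) ∧
    Tendsto heaviside (𝓝[>] x) (𝓝 b) ∧ (a + b) / 2 = heaviside x := by
  rcases eq_or_ne x 0 with rfl | hx
  · refine ⟨0, 1, tendsto_const_nhds.congr' ?_, tendsto_const_nhds.congr' ?_, ?_⟩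
    · filter_upwards [self_mem_nhdsWithin] with t ht using (heaviside_of_neg ht).symm
    · filter_upwards [self_mem_nhdsWithin] with t ht using (heaviside_of_pos ht).symm
    · simp [heaviside]
  · have := tendsto_heaviside_of_ne hx
    exact ⟨_, _, this.mono_left nhdsWithin_le_nhds, this.mono_left nhdsWithin_le_nhds,
      add_self_div_two _⟩

lemma intervalIntegrable_exp_mul_measureReal_Iio (μ : Measure ℝ) [IsFiniteMeasure μ] (s a b : ℝ) :
    IntervalIntegrable (fun t : ℝ => Complex.exp (-(Complex.I * s * t)) * (μ.real (Iio t) : ℂ))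
      volume a b := by
  have hmono : Monotone fun t : ℝ => μ.real (Iio t) :=
    fun t u h => measureReal_mono (Iio_subset_Iio h)
  have hm : Measurable fun t : ℝ => Complex.exp (-(Complex.I * s * t)) * (μ.real (Iio t) : ℂ) :=
    Measurable.mul (by fun_prop) (Complex.measurable_ofReal.comp hmono.measurable)
  rw [intervalIntegrable_iff]
  have := isFiniteMeasure_restrict_uIoc a b
  refine Integrable.of_bound hm.aestronglyMeasurable (μ.real univ) (ae_of_all _ fun t => ?_)
  rw [norm_mul, norm_exp_neg_I_mul, one_mul, Complex.norm_real, Real.norm_eq_abs,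
    abs_of_nonneg measureReal_nonneg]
  exact measureReal_mono (subset_univ _)

/-- Fourier inversion for a function of bounded variation vanishing at `±∞`. -/
theorem fourier_inversion_of_boundedVariationOn {g : ℝ → ℝ} (hg : BoundedVariationOn g univ)
    (htop : Tendsto g atTop (𝓝 0)) (hbot : Tendsto g atBot (𝓝 0)) :
    ∃ G : ℝ → ℂ,
      (∀ s : ℝ, s ≠ 0 → Tendsto
        (fun P : ℝ × ℝ => ∫ t in P.1..P.2, Complex.exp (-(Complex.I * s * t)) * (g t : ℂ))
        (atBot ×ˢ atTop) (𝓝 (G s))) ∧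
      ∀ x l r : ℝ, Tendsto g (𝓝[<] x) (𝓝 l) → Tendsto g (𝓝[>] x) (𝓝 r) →
        Tendsto
          (fun P : ℝ × ℝ => (1 / (2 * (Real.pi : ℂ))) *
            ((∫ s in (-P.1)..(-P.2), Complex.exp (Complex.I * x * s) * G s) +
              ∫ s in P.2..P.1, Complex.exp (Complex.I * x * s) * G s))
          (atTop ×ˢ 𝓝[>] 0) (𝓝 (((l + r) / 2 : ℝ) : ℂ)) := by
  obtain ⟨μ, ν, _, _, hμν, hae, hl, hr⟩ := exists_measures_of_boundedVariationOn hg htop hbot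
  refine ⟨fun s => charFun μ (-s) / (Complex.I * s) - charFun ν (-s) / (Complex.I * s),
    fun s hs => ?_, fun x l r hxl hxr => ?_⟩
  · refine ((tendsto_integral_exp_mul_measureReal_Iio μ hs).sub
      (tendsto_integral_exp_mul_measureReal_Iio ν hs)).congr fun P => ?_
    rw [hμν, add_sub_add_right_eq_sub, ← intervalIntegral.integral_sub
      (intervalIntegrable_exp_mul_measureReal_Iio μ s _ _)
      (intervalIntegrable_exp_mul_measureReal_Iio ν s _ _)]
    refine intervalIntegral.integral_congr_ae ?_
    filter_upwards [hae] with t ht _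
    rw [ht]
    push_cast
    ring
  · have hlim := ((tendsto_integral_exp_mul_charFun_div μ x).sub
      (tendsto_integral_exp_mul_charFun_div ν x)).const_mul (1 / (2 * (Real.pi : ℂ)))
    have hval : (1 / (2 * (Real.pi : ℂ))) *
        (((Real.pi * (μ.real (Iio x) - μ.real (Ioi x)) : ℝ) : ℂ) -
          ((Real.pi * (ν.real (Iio x) - ν.real (Ioi x)) : ℝ) : ℂ)) = (((l + r) / 2 : ℝ) : ℂ) := by
      have hpi : (Real.pi : ℂ) ≠ 0 := by exact_mod_cast Real.pi_ne_zero
      have hIoi : ∀ (ρ : Measure ℝ) [IsFiniteMeasure ρ],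
          ρ.real (Ioi x) = ρ.real univ - ρ.real (Iic x) := fun ρ _ => by
        rw [← compl_Iic, measureReal_compl measurableSet_Iic]
      rw [hl x l hxl, hr x r hxr, hIoi, hIoi, hμν]
      push_cast
      field_simp
      ring
    rw [hval] at hlim
    refine hlim.congr' ?_
    filter_upwards [(eventually_gt_atTop (0:ℝ)).prod_mk
      (self_mem_nhdsWithin (a := (0:ℝ)) (s := Ioi 0))] with P hP
    have hT : 0 < P.1 := hP.1
    have hS : 0 < P.2 := hP.2
    have h1 : (0:ℝ) ∉ uIcc (-P.1) (-P.2) := fun h => by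
      rw [mem_uIcc] at h
      rcases h with h | h <;> linarith [h.1, h.2]
    have h2 : (0:ℝ) ∉ uIcc P.2 P.1 := fun h => by
      rw [mem_uIcc] at h
      rcases h with h | h <;> linarith [h.1, h.2]
    simp_rw [mul_sub (Complex.exp _)]
    rw [intervalIntegral.integral_sub (intervalIntegrable_exp_mul_charFun_div μ x h1)
        (intervalIntegrable_exp_mul_charFun_div ν x h1),
      intervalIntegral.integral_sub (intervalIntegrable_exp_mul_charFun_div μ x h2)
        (intervalIntegrable_exp_mul_charFun_div ν x h2)]
    ring

/-- Inversion for a function asymptotic to polynomials `p₊`, `p₋` at `±∞`: with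
`g(x) = f(x) - H(x)p₊(x) - H(-x)p₋(x)` of bounded variation on `ℝ` and tending to `0` at
`±∞`, the improper-integral Fourier transform `ĝ(s)` exists for `s ≠ 0` and
`(f(x-)+f(x+))/2 = (1/(2π)) lim_{T→∞,S→0⁺} ∫_{S<|s|<T} e^{ixs} ĝ(s) ds
+ H(x)p₊(x) + H(-x)p₋(x)`. -/
theorem fourier_inversion_polynomial_growth (f : ℝ → ℝ)
    (pplus pminus : Polynomial ℝ)
    (hbv : BoundedVariationOn
      (fun t : ℝ => f t - heaviside t * pplus.eval t - heaviside (-t) * pminus.eval t)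
      Set.univ)
    (htop : Filter.Tendsto
      (fun t : ℝ => f t - heaviside t * pplus.eval t - heaviside (-t) * pminus.eval t)
      Filter.atTop (nhds 0))
    (hbot : Filter.Tendsto
      (fun t : ℝ => f t - heaviside t * pplus.eval t - heaviside (-t) * pminus.eval t)
      Filter.atBot (nhds 0)) :
    ∃ G : ℝ → ℂ,
      (∀ s : ℝ, s ≠ 0 → Filter.Tendsto
        (fun P : ℝ × ℝ =>
          ∫ t in P.1..P.2, Complex.exp (-(Complex.I * s * t)) *
            ((f t - heaviside t * pplus.eval t - heaviside (-t) * pminus.eval t : ℝ) : ℂ))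
        (Filter.atBot ×ˢ Filter.atTop) (nhds (G s))) ∧
      ∀ x fl fr : ℝ,
        Filter.Tendsto f (nhdsWithin x (Set.Iio x)) (nhds fl) →
        Filter.Tendsto f (nhdsWithin x (Set.Ioi x)) (nhds fr) →
        Filter.Tendsto
          (fun P : ℝ × ℝ => (1 / (2 * (Real.pi : ℂ))) *
            ((∫ s in (-P.1)..(-P.2), Complex.exp (Complex.I * x * s) * G s) +
              ∫ s in P.2..P.1, Complex.exp (Complex.I * x * s) * G s))
          (Filter.atTop ×ˢ nhdsWithin 0 (Set.Ioi 0))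
          (nhds (((fl + fr) / 2 - heaviside x * pplus.eval x
            - heaviside (-x) * pminus.eval x : ℝ) : ℂ)) := by
  obtain ⟨G, hG, hinv⟩ := fourier_inversion_of_boundedVariationOn hbv htop hbot
  refine ⟨G, hG, fun x fl fr hfl hfr => ?_⟩
  obtain ⟨a, b, ha, hb, hab⟩ := exists_tendsto_heaviside x
  have hp : ∀ (p : Polynomial ℝ) (s : Set ℝ),
      Tendsto (fun t => p.eval t) (𝓝[s] x) (𝓝 (p.eval x)) :=
    fun p s => (p.continuous.tendsto x).mono_left nhdsWithin_le_nhds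
  have hlim : ∀ {s : Set ℝ} {c y : ℝ}, Tendsto f (𝓝[s] x) (𝓝 y) →
      Tendsto heaviside (𝓝[s] x) (𝓝 c) →
      Tendsto (fun t : ℝ => f t - heaviside t * pplus.eval t - heaviside (-t) * pminus.eval t)
        (𝓝[s] x) (𝓝 (y - c * pplus.eval x - (1 - c) * pminus.eval x)) := by
    intro s c y hy hc
    simp_rw [heaviside_neg]
    exact (hy.sub (hc.mul (hp pplus s))).sub ((hc.const_sub 1).mul (hp pminus s))
  convert hinv x _ _ (hlim hfl ha) (hlim hfr hb) using 3
  rw [heaviside_neg, ← hab]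
  ring
end

section
/- Let 0 < α < 2, let C_α = lim_{R→∞} ∫_0^R sin(t)·t^{-α} dt, and define f̂(s) = −2i·sgn(s)·|s|^{α−1}·C_α for s ≠ 0 (f̂ is Lebesgue integrable on any neighbourhood of 0 since α − 1 > −1). Then for each x ≠ 0, with T_n = (2n+1)π/(2|x|), one has sgn(x)|x|^{-α} = (1/(2π)) · lim_{n→∞} ∫_{-T_n}^{T_n} e^{ixs} f̂(s) ds. -/
open MeasureTheory Set Filter Topology

/-- The function `y ↦ y ^ (a - 1) / (1 + y ^ 2)` is integrable on `(0, ∞)` for `0 < a < 2`, with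
integral `π / (2 sin (π a / 2))`. -/
theorem integral_rpow_div_one_add_sq {a : ℝ} (ha0 : 0 < a) (ha2 : a < 2) :
    IntegrableOn (fun y : ℝ => y ^ (a - 1) / (1 + y ^ 2)) (Ioi 0) ∧
      ∫ y in Ioi (0 : ℝ), y ^ (a - 1) / (1 + y ^ 2) =
        Real.pi / (2 * Real.sin (Real.pi * (a / 2))) := by
  let F : ℝ → ℝ → ℝ := fun s y => y ^ (a - 1) * Real.exp (-(1 + y ^ 2) * s)
  have inner_y : ∀ s ∈ Ioi (0 : ℝ), ∫ y in Ioi (0 : ℝ), F s y =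
      (1 / 2 * Real.Gamma (a / 2)) * (s ^ ((1 - a / 2) - 1) * Real.exp (-(1 * s))) := by
    intro s hs
    have h := integral_rpow_mul_exp_neg_mul_rpow (p := 2) (q := a - 1) (b := s) two_pos
      (by linarith) hs
    have h1 : ∀ y : ℝ, F s y =
        Real.exp (-(1 * s)) * (y ^ (a - 1) * Real.exp (-s * y ^ (2 : ℝ))) := by
      intro y
      simp only [F, Real.rpow_two]
      rw [mul_left_comm, ← Real.exp_add]
      ring_nf
    simp_rw [h1]
    rw [integral_const_mul, h]
    ring_nf
  have inner_s : ∀ y : ℝ, ∫ s in Ioi (0 : ℝ), F s y = y ^ (a - 1) / (1 + y ^ 2) := by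
    intro y
    have h := integral_exp_mul_Ioi (a := -(1 + y ^ 2)) (by nlinarith [sq_nonneg y]) 0
    simp only [F]
    rw [integral_const_mul, h]
    simp only [mul_zero, Real.exp_zero]
    rw [neg_div_neg_eq, mul_one_div]
  have hGamma : IntegrableOn (fun s : ℝ => (1 / 2 * Real.Gamma (a / 2)) *
      (s ^ ((1 - a / 2) - 1) * Real.exp (-(1 * s)))) (Ioi 0) := by
    have h := Real.GammaIntegral_convergent (s := 1 - a / 2) (by linarith)
    refine Integrable.const_mul ?_ _
    simpa [mul_comm, IntegrableOn] using h
  have hF : Integrable (Function.uncurry F)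
      ((volume.restrict (Ioi 0)).prod (volume.restrict (Ioi 0))) := by
    have hmeas : Measurable (Function.uncurry F) := by
      simp only [F]
      fun_prop
    rw [integrable_prod_iff hmeas.aestronglyMeasurable]
    constructor
    · filter_upwards [ae_restrict_mem measurableSet_Ioi] with s hs
      have h := integrableOn_rpow_mul_exp_neg_mul_sq (b := s) hs (s := a - 1) (by linarith)
      refine (h.const_mul (Real.exp (-s))).congr (Eventually.of_forall fun y => ?_)
      simp only [Function.uncurry, F]
      rw [mul_left_comm, ← Real.exp_add]
      ring_nf
    · refine Integrable.congr hGamma ?_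
      filter_upwards [ae_restrict_mem measurableSet_Ioi] with s hs
      rw [← inner_y s hs]
      refine setIntegral_congr_fun measurableSet_Ioi fun y hy => ?_
      have hy : 0 < y := hy
      exact (Real.norm_of_nonneg (by simp only [F]; positivity)).symm
  refine ⟨?_, ?_⟩
  · simpa only [Function.uncurry, inner_s, IntegrableOn] using hF.integral_prod_right
  · have hswap := integral_integral_swap hF
    simp only [inner_s] at hswap
    rw [← hswap, setIntegral_congr_fun measurableSet_Ioi inner_y, integral_const_mul,
      Real.integral_rpow_mul_exp_neg_mul_Ioi (by linarith) one_pos]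
    have h := Real.Gamma_mul_Gamma_one_sub (a / 2)
    rw [div_one, Real.one_rpow, one_mul, mul_assoc, h]
    field_simp

theorem integral_sin_mul_exp_neg (y T : ℝ) :
    ∫ t in (0 : ℝ)..T, Real.sin t * Real.exp (-(t * y)) =
      (1 - Real.exp (-(T * y)) * (Real.cos T + y * Real.sin T)) / (1 + y ^ 2) := by
  have hy : 1 + y ^ 2 ≠ 0 := by positivity
  have hderiv : ∀ t ∈ uIcc 0 T, HasDerivAt
      (fun t => -(Real.exp (-(t * y)) * (Real.cos t + y * Real.sin t)) / (1 + y ^ 2))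
      (Real.sin t * Real.exp (-(t * y))) t := by
    intro t _
    have h1 : HasDerivAt (fun t => Real.exp (-(t * y))) (Real.exp (-(t * y)) * (-(1 * y))) t :=
      (((hasDerivAt_id t).mul_const y).neg).exp
    have h2 : HasDerivAt (fun t => Real.cos t + y * Real.sin t) (-Real.sin t + y * Real.cos t) t :=
      (Real.hasDerivAt_cos t).add ((Real.hasDerivAt_sin t).const_mul y)
    refine ((h1.mul h2).neg.div_const (1 + y ^ 2)).congr_deriv ?_
    field_simp
    ring
  rw [intervalIntegral.integral_eq_sub_of_hasDerivAt hderiv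
    (Continuous.intervalIntegrable (by fun_prop) _ _)]
  simp
  ring

theorem intervalIntegrable_sin_mul_rpow {r : ℝ} (hr : -2 < r) {T : ℝ} (hT : 0 ≤ T) :
    IntervalIntegrable (fun t => Real.sin t * t ^ r) volume 0 T := by
  have h := intervalIntegral.intervalIntegrable_rpow' (a := 0) (b := T) (r := r + 1) (by linarith)
  refine h.mono_fun (Measurable.aestronglyMeasurable (by fun_prop)) ?_
  rw [uIoc_of_le hT]
  filter_upwards [ae_restrict_mem measurableSet_Ioc] with t ht
  have ht0 := ht.1
  rw [norm_mul, Real.rpow_add_one ht0.ne', norm_mul, mul_comm]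
  gcongr
  exact Real.abs_sin_le_abs

/-- The improper integral of `sin t * t ^ (-a)` over `(0, ∞)` for `0 < a < 2`. -/
theorem tendsto_integral_sin_mul_rpow_neg {a : ℝ} (ha0 : 0 < a) (ha2 : a < 2) :
    Tendsto (fun T : ℝ => ∫ t in (0 : ℝ)..T, Real.sin t * t ^ (-a)) atTop
      (𝓝 (Real.pi / (2 * Real.sin (Real.pi * (a / 2))) / Real.Gamma a)) := by
  obtain ⟨hint, hval⟩ := integral_rpow_div_one_add_sq ha0 ha2
  have hΓ : 0 < Real.Gamma a := Real.Gamma_pos_of_pos ha0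
  have hlaplace : ∀ t ∈ Ioi (0 : ℝ), ∫ y in Ioi (0 : ℝ), y ^ (a - 1) * Real.exp (-(t * y)) =
      t ^ (-a) * Real.Gamma a := by
    intro t ht
    have ht : 0 < t := ht
    rw [Real.integral_rpow_mul_exp_neg_mul_Ioi ha0 ht, one_div, Real.inv_rpow ht.le,
      Real.rpow_neg ht.le]
  have hlaplace_int : ∀ t ∈ Ioi (0 : ℝ),
      IntegrableOn (fun y : ℝ => y ^ (a - 1) * Real.exp (-(t * y))) (Ioi 0) := by
    intro t ht
    have h := integrableOn_rpow_mul_exp_neg_mul_rpow (p := 1) (s := a - 1) (b := t)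
      (by linarith) one_pos ht
    simpa using h
  have hformula : ∀ T : ℝ, 0 < T → (∫ t in (0 : ℝ)..T, Real.sin t * t ^ (-a)) * Real.Gamma a =
      ∫ y in Ioi (0 : ℝ), y ^ (a - 1) *
        ((1 - Real.exp (-(T * y)) * (Real.cos T + y * Real.sin T)) / (1 + y ^ 2)) := by
    intro T hT
    let F : ℝ → ℝ → ℝ := fun t y => Real.sin t * (y ^ (a - 1) * Real.exp (-(t * y)))
    have hF : Integrable (Function.uncurry F)
        ((volume.restrict (uIoc 0 T)).prod (volume.restrict (Ioi 0))) := by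
      have hmeas : Measurable (Function.uncurry F) := by
        simp only [F]
        fun_prop
      rw [uIoc_of_le hT.le, integrable_prod_iff hmeas.aestronglyMeasurable]
      constructor
      · filter_upwards [ae_restrict_mem measurableSet_Ioc] with t ht
        exact (hlaplace_int t ht.1).const_mul (Real.sin t)
      · have h := (intervalIntegrable_sin_mul_rpow (r := -a) (by linarith) hT.le).norm.mul_const
          (Real.Gamma a)
        rw [intervalIntegrable_iff_integrableOn_Ioc_of_le hT.le] at h
        refine Integrable.congr h ?_
        filter_upwards [ae_restrict_mem measurableSet_Ioc] with t ht
        have ht0 := ht.1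
        rw [norm_mul, Real.norm_of_nonneg (by positivity : 0 ≤ t ^ (-a)), mul_assoc,
          ← hlaplace t ht.1, ← integral_const_mul]
        refine setIntegral_congr_fun measurableSet_Ioi fun y hy => ?_
        have hy : 0 < y := hy
        simp only [Function.uncurry, F]
        rw [norm_mul, Real.norm_of_nonneg (by positivity : 0 ≤ y ^ (a - 1) * Real.exp (-(t * y)))]
    have hswap := intervalIntegral_integral_swap hF
    rw [← intervalIntegral.integral_mul_const]
    have hleft : ∫ t in (0 : ℝ)..T, Real.sin t * t ^ (-a) * Real.Gamma a =
        ∫ t in (0 : ℝ)..T, ∫ y in Ioi (0 : ℝ), F t y := by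
      rw [intervalIntegral.integral_of_le hT.le, intervalIntegral.integral_of_le hT.le]
      refine setIntegral_congr_fun measurableSet_Ioc fun t ht => ?_
      simp only [F]
      rw [integral_const_mul, hlaplace t ht.1, mul_assoc]
    rw [hleft, hswap]
    refine integral_congr_ae (Eventually.of_forall fun y => ?_)
    simp only [F]
    rw [← integral_sin_mul_exp_neg, ← intervalIntegral.integral_const_mul]
    congr 1
    ext t
    ring
  have hbound : ∀ T : ℝ, 0 < T →
      ‖(∫ t in (0 : ℝ)..T, Real.sin t * t ^ (-a)) * Real.Gamma a -
        Real.pi / (2 * Real.sin (Real.pi * (a / 2)))‖ ≤ 2 * (T ^ (-a) * Real.Gamma a) := by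
    intro T hT
    have hpoint : ∀ y ∈ Ioi (0 : ℝ), ‖y ^ (a - 1) *
        (Real.exp (-(T * y)) * (Real.cos T + y * Real.sin T) / (1 + y ^ 2))‖ ≤
        2 * (y ^ (a - 1) * Real.exp (-(T * y))) := by
      intro y hy
      have hy : 0 < y := hy
      have hc : |Real.cos T + y * Real.sin T| ≤ 2 * (1 + y ^ 2) := by
        have h1 := abs_le.1 (Real.abs_cos_le_one T)
        have h2 := abs_le.1 (Real.abs_sin_le_one T)
        rw [abs_le]
        constructor <;> nlinarith [sq_nonneg (y - 1)]
      have hd : |Real.cos T + y * Real.sin T| / (1 + y ^ 2) ≤ 2 := by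
        rwa [div_le_iff₀ (by positivity)]
      rw [Real.norm_eq_abs, abs_mul, abs_div, abs_mul, Real.abs_exp,
        abs_of_pos (by positivity : 0 < 1 + y ^ 2), abs_of_pos (Real.rpow_pos_of_pos hy _),
        mul_div_assoc]
      calc _ = (y ^ (a - 1) * Real.exp (-(T * y))) *
            (|Real.cos T + y * Real.sin T| / (1 + y ^ 2)) := by ring
        _ ≤ (y ^ (a - 1) * Real.exp (-(T * y))) * 2 := by gcongr
        _ = _ := by ring
    have hdom := (hlaplace_int T hT).const_mul 2
    have hpoint_ae := (ae_restrict_mem (μ := volume) (measurableSet_Ioi (a := (0 : ℝ)))).mono hpoint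
    have herr := Integrable.mono' hdom (Measurable.aestronglyMeasurable (by fun_prop)) hpoint_ae
    have hle := norm_integral_le_of_norm_le hdom hpoint_ae
    rw [integral_const_mul, hlaplace T hT] at hle
    refine le_of_eq_of_le ?_ hle
    rw [hformula T hT, ← hval, ← norm_neg, neg_sub, ← integral_sub hint]
    · congr 2
      ext y
      ring
    · refine (hint.sub herr).congr (Eventually.of_forall fun y => ?_)
      simp only [Pi.sub_apply]
      ring
  have hlim : Tendsto (fun T : ℝ => (∫ t in (0 : ℝ)..T, Real.sin t * t ^ (-a)) * Real.Gamma a)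
      atTop (𝓝 (Real.pi / (2 * Real.sin (Real.pi * (a / 2))))) := by
    rw [tendsto_iff_norm_sub_tendsto_zero]
    have h0 : Tendsto (fun T : ℝ => 2 * (T ^ (-a) * Real.Gamma a)) atTop (𝓝 0) := by
      simpa using ((tendsto_rpow_neg_atTop ha0).mul_const (Real.Gamma a)).const_mul 2
    exact squeeze_zero' (Eventually.of_forall fun T => norm_nonneg _)
      ((eventually_gt_atTop 0).mono hbound) h0
  refine (hlim.div_const (Real.Gamma a)).congr fun T => ?_
  rw [mul_div_cancel_right₀ _ hΓ.ne']

theorem cos_half_odd_mul_pi (n : ℕ) : Real.cos ((2 * (n : ℝ) + 1) * Real.pi / 2) = 0 := by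
  rw [Real.cos_eq_zero_iff]
  exact ⟨n, by push_cast; ring⟩

theorem tendsto_half_odd_mul_pi :
    Tendsto (fun n : ℕ => (2 * (n : ℝ) + 1) * Real.pi / 2) atTop atTop := by
  refine Tendsto.atTop_div_const two_pos (Tendsto.atTop_mul_const Real.pi_pos ?_)
  exact tendsto_atTop_add_const_right _ _
    (tendsto_natCast_atTop_atTop.const_mul_atTop two_pos)

/-- Two integrations by parts, lowering the exponent of `u` by two. -/
theorem integral_sin_mul_rpow_eq {α : ℝ} (hα1 : 1 < α) {T : ℝ} (hT : 0 < T) :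
    ∫ u in (0 : ℝ)..T, Real.sin u * u ^ (α - 1) =
      -(Real.cos T * T ^ (α - 1)) + (α - 1) * (Real.sin T * T ^ (α - 2)) +
        (α - 1) * (2 - α) * ∫ u in (0 : ℝ)..T, Real.sin u * u ^ (-(3 - α)) := by
  have hint1 := intervalIntegrable_sin_mul_rpow (r := α - 1) (by linarith) hT.le
  have hint2 := intervalIntegrable_sin_mul_rpow (r := -(3 - α)) (by linarith) hT.le
  have hderiv : ∀ u ∈ Ioo 0 T, HasDerivAt
      (fun u => -(Real.cos u * u ^ (α - 1)) + (α - 1) * (Real.sin u * u ^ (α - 2)))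
      (Real.sin u * u ^ (α - 1) - (α - 1) * (2 - α) * (Real.sin u * u ^ (-(3 - α)))) u := by
    intro u hu
    have hu0 := hu.1.ne'
    have h1 := ((Real.hasDerivAt_cos u).mul
      (Real.hasDerivAt_rpow_const (p := α - 1) (Or.inl hu0))).neg
    have h2 := ((Real.hasDerivAt_sin u).mul
      (Real.hasDerivAt_rpow_const (p := α - 2) (Or.inl hu0))).const_mul (α - 1)
    refine (h1.add h2).congr_deriv ?_
    rw [show α - 1 - 1 = α - 2 by ring, show α - 2 - 1 = -(3 - α) by ring]
    ring
  have h0 : Tendsto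
      (fun u => -(Real.cos u * u ^ (α - 1)) + (α - 1) * (Real.sin u * u ^ (α - 2)))
      (𝓝[>] 0) (𝓝 0) := by
    have hp : Tendsto (fun u : ℝ => u ^ (α - 1)) (𝓝[>] 0) (𝓝 0) := by
      have h := (Real.continuousAt_rpow_const 0 (α - 1) (Or.inr (by linarith))).tendsto
      rw [Real.zero_rpow (by linarith)] at h
      exact h.mono_left nhdsWithin_le_nhds
    have hc : Tendsto (fun u : ℝ => Real.cos u * u ^ (α - 1)) (𝓝[>] 0) (𝓝 0) := by
      have h := (Real.continuous_cos.tendsto 0).mono_left (nhdsWithin_le_nhds (s := Ioi 0))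
      simpa using h.mul hp
    have hs : Tendsto (fun u : ℝ => Real.sin u * u ^ (α - 2)) (𝓝[>] 0) (𝓝 0) := by
      refine squeeze_zero_norm' ?_ hp
      filter_upwards [self_mem_nhdsWithin] with u hu
      have hu : 0 < u := hu
      rw [show α - 1 = 1 + (α - 2) by ring, Real.rpow_add hu, Real.rpow_one, norm_mul,
        Real.norm_of_nonneg (by positivity : 0 ≤ u ^ (α - 2))]
      gcongr
      exact (Real.abs_sin_le_abs (x := u)).trans_eq (abs_of_pos hu)
    simpa using hc.neg.add (hs.const_mul (α - 1))
  have hT' : Tendsto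
      (fun u => -(Real.cos u * u ^ (α - 1)) + (α - 1) * (Real.sin u * u ^ (α - 2)))
      (𝓝[<] T) (𝓝 (-(Real.cos T * T ^ (α - 1)) + (α - 1) * (Real.sin T * T ^ (α - 2)))) := by
    refine Tendsto.mono_left (ContinuousAt.tendsto ?_) nhdsWithin_le_nhds
    have h1 := Real.continuousAt_rpow_const T (α - 1) (Or.inl hT.ne')
    have h2 := Real.continuousAt_rpow_const T (α - 2) (Or.inl hT.ne')
    fun_prop
  have h := intervalIntegral.integral_eq_sub_of_hasDerivAt_of_tendsto hT hderiv
    (hint1.sub (hint2.const_mul _)) h0 hT'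
  rw [intervalIntegral.integral_sub hint1 (hint2.const_mul _),
    intervalIntegral.integral_const_mul] at h
  linarith

/-- The integral of `sin u * u ^ (α - 1)` over `(0, ∞)` for `0 < α < 2`, truncated at the zeros of
the cosine. -/
theorem tendsto_integral_sin_mul_rpow_half_odd {α : ℝ} (hα0 : 0 < α) (hα2 : α < 2) :
    Tendsto (fun n : ℕ => ∫ u in (0 : ℝ)..((2 * (n : ℝ) + 1) * Real.pi / 2),
      Real.sin u * u ^ (α - 1)) atTop
      (𝓝 (Real.Gamma α * Real.sin (Real.pi * (α / 2)))) := by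
  have hπ := Real.pi_pos
  have hrefl := Real.Gamma_mul_Gamma_one_sub α
  have hsin_two : Real.sin (Real.pi * α) =
      2 * Real.sin (Real.pi * (α / 2)) * Real.cos (Real.pi * (α / 2)) := by
    rw [← Real.sin_two_mul]
    ring_nf
  have hs : Real.sin (Real.pi * (α / 2)) ≠ 0 :=
    (Real.sin_pos_of_pos_of_lt_pi (by positivity) (by nlinarith)).ne'
  rcases lt_trichotomy α 1 with h1 | rfl | h1
  · have h := (tendsto_integral_sin_mul_rpow_neg (a := 1 - α) (by linarith) (by linarith)).comp
      tendsto_half_odd_mul_pi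
    have hc : Real.cos (Real.pi * (α / 2)) ≠ 0 :=
      (Real.cos_pos_of_mem_Ioo ⟨by nlinarith, by nlinarith⟩).ne'
    have hΓ : Real.Gamma (1 - α) ≠ 0 := (Real.Gamma_pos_of_pos (by linarith)).ne'
    convert h using 1
    · ext n
      simp
    · rw [show Real.pi * ((1 - α) / 2) = Real.pi / 2 - Real.pi * (α / 2) by ring,
        Real.sin_pi_div_two_sub, eq_div_of_mul_eq hΓ hrefl, hsin_two]
      generalize Real.sin (Real.pi * (α / 2)) = S at hs ⊢
      generalize Real.cos (Real.pi * (α / 2)) = K at hc ⊢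
      congr 1
      field_simp
  · simp [cos_half_odd_mul_pi, ← div_eq_mul_inv]
  · have hc : Real.cos (Real.pi * (α / 2)) ≠ 0 :=
      (Real.cos_neg_of_pi_div_two_lt_of_lt (by nlinarith) (by nlinarith)).ne
    have hΓ3 : Real.Gamma (3 - α) = (2 - α) * ((1 - α) * Real.Gamma (1 - α)) := by
      rw [show 3 - α = (2 - α) + 1 by ring, Real.Gamma_add_one (by linarith),
        ← Real.Gamma_add_one (by linarith : 1 - α ≠ 0), show 1 - α + 1 = 2 - α by ring]
    have hΓ3_ne : Real.Gamma (3 - α) ≠ 0 := (Real.Gamma_pos_of_pos (by linarith)).ne'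
    have hΓ : Real.Gamma (1 - α) ≠ 0 := fun h => hΓ3_ne (by rw [hΓ3, h]; ring)
    have h := ((tendsto_integral_sin_mul_rpow_neg (a := 3 - α) (by linarith) (by linarith)).comp
      tendsto_half_odd_mul_pi).const_mul ((α - 1) * (2 - α))
    have hb : Tendsto (fun n : ℕ => (α - 1) * (Real.sin ((2 * (n : ℝ) + 1) * Real.pi / 2) *
        ((2 * (n : ℝ) + 1) * Real.pi / 2) ^ (α - 2))) atTop (𝓝 0) := by
      have hp := (tendsto_rpow_neg_atTop (y := 2 - α) (by linarith)).comp tendsto_half_odd_mul_pi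
      rw [neg_sub] at hp
      have hq : Tendsto (fun n : ℕ => Real.sin ((2 * (n : ℝ) + 1) * Real.pi / 2) *
          ((2 * (n : ℝ) + 1) * Real.pi / 2) ^ (α - 2)) atTop (𝓝 0) := by
        refine squeeze_zero_norm (fun n => ?_) hp
        have hn : 0 ≤ ((2 * (n : ℝ) + 1) * Real.pi / 2) ^ (α - 2) := by positivity
        rw [norm_mul, Real.norm_of_nonneg hn]
        exact mul_le_of_le_one_left hn (Real.abs_sin_le_one _)
      simpa using hq.const_mul (α - 1)
    convert hb.add h using 1
    · ext n
      rw [integral_sin_mul_rpow_eq h1 (by positivity), cos_half_odd_mul_pi]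
      simp
    · have hα1 : 1 - α ≠ 0 := by linarith
      have hα2' : 2 - α ≠ 0 := by linarith
      rw [show Real.pi * ((3 - α) / 2) = Real.pi / 2 - Real.pi * (α / 2) + Real.pi by ring,
        Real.sin_add_pi, Real.sin_pi_div_two_sub, eq_div_of_mul_eq hΓ hrefl, hsin_two, hΓ3]
      generalize Real.sin (Real.pi * (α / 2)) = S at hs ⊢
      generalize Real.cos (Real.pi * (α / 2)) = K at hc ⊢
      congr 1
      field_simp
      ring

theorem integral_sin_const_mul_rpow {α x T : ℝ} (hx : x ≠ 0) (hT : 0 ≤ T) :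
    ∫ s in (0 : ℝ)..(T / |x|), Real.sin (x * s) * s ^ (α - 1) =
      Real.sign x * |x| ^ (-α) * ∫ u in (0 : ℝ)..T, Real.sin u * u ^ (α - 1) := by
  have hx' : 0 < |x| := abs_pos.2 hx
  have hcv := intervalIntegral.mul_integral_comp_mul_left (a := 0) (b := T / |x|)
    (f := fun u => Real.sin u * u ^ (α - 1)) |x|
  rw [mul_zero, mul_div_cancel₀ _ hx'.ne'] at hcv
  rw [← hcv, ← mul_assoc, ← intervalIntegral.integral_const_mul]
  refine intervalIntegral.integral_congr fun s hs => ?_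
  rw [uIcc_of_le (by positivity)] at hs
  have hsin : Real.sin (x * s) = Real.sign x * Real.sin (|x| * s) := by
    rcases lt_or_gt_of_ne hx with h | h
    · simp [Real.sign_of_neg h, abs_of_neg h]
    · simp [Real.sign_of_pos h, abs_of_pos h]
  have hpow : |x| ^ (-α) * |x| * |x| ^ (α - 1) = 1 := by
    rw [← Real.rpow_add_one hx'.ne', ← Real.rpow_add hx']
    simp
  rw [Real.mul_rpow hx'.le hs.1, hsin]
  linear_combination -(Real.sign x * Real.sin (|x| * s) * s ^ (α - 1)) * hpow

theorem intervalIntegrable_exp_mul_sign_rpow {α : ℝ} (hα0 : 0 < α) (C x : ℝ) {T : ℝ}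
    (hT : 0 ≤ T) :
    IntervalIntegrable (fun s : ℝ => Complex.exp (Complex.I * x * s) *
      ((-2 : ℂ) * Complex.I * ((Real.sign s : ℝ) : ℂ) * ((|s| ^ (α - 1) : ℝ) : ℂ) * (C : ℂ)))
      volume 0 T := by
  have h := (intervalIntegral.intervalIntegrable_rpow' (a := 0) (b := T) (r := α - 1)
    (by linarith)).mul_const (2 * C)
  have hsign : Measurable Real.sign := by
    unfold Real.sign
    exact Measurable.ite measurableSet_Iio measurable_const
      (Measurable.ite measurableSet_Ioi measurable_const measurable_const)
  refine h.mono_fun (Measurable.aestronglyMeasurable (by fun_prop)) ?_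
  rw [uIoc_of_le hT]
  filter_upwards [ae_restrict_mem measurableSet_Ioc] with s hs
  have he : ‖Complex.exp (Complex.I * x * s)‖ = 1 := by
    rw [← Complex.norm_exp_ofReal_mul_I (x * s)]
    push_cast
    ring_nf
  rw [norm_mul, he, Real.sign_of_pos hs.1, abs_of_pos hs.1]
  simp only [norm_mul, norm_neg, Complex.norm_I, Complex.norm_real, Complex.norm_ofNat, norm_one,
    Complex.ofReal_one, Real.norm_ofNat]
  apply le_of_eq
  ring

/-- The truncated inverse Fourier integral of an odd power is a sine integral. -/
theorem integral_exp_mul_sign_rpow {α : ℝ} (hα0 : 0 < α) (C x : ℝ) {T : ℝ} (hT : 0 ≤ T) :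
    ∫ s in (-T)..T, Complex.exp (Complex.I * x * s) *
      ((-2 : ℂ) * Complex.I * ((Real.sign s : ℝ) : ℂ) * ((|s| ^ (α - 1) : ℝ) : ℂ) * (C : ℂ)) =
      ((4 * C * ∫ s in (0 : ℝ)..T, Real.sin (x * s) * s ^ (α - 1) : ℝ) : ℂ) := by
  set g : ℝ → ℂ := fun s => Complex.exp (Complex.I * x * s) *
    ((-2 : ℂ) * Complex.I * ((Real.sign s : ℝ) : ℂ) * ((|s| ^ (α - 1) : ℝ) : ℂ) * (C : ℂ)) with hg
  have hpos : IntervalIntegrable g volume 0 T := intervalIntegrable_exp_mul_sign_rpow hα0 C x hT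
  have hneg : IntervalIntegrable (fun s => g (-s)) volume 0 T := by
    refine (intervalIntegrable_exp_mul_sign_rpow hα0 C (-x) hT).neg.congr fun s _ => ?_
    simp [hg, Real.sign_neg]
  have hneg' : IntervalIntegrable g volume (-T) 0 := by
    simpa using ((IntervalIntegrable.iff_comp_neg (by simp)).1 hneg).symm
  have hleft : ∫ s in (-T)..0, g s = ∫ s in (0 : ℝ)..T, g (-s) := by
    rw [intervalIntegral.integral_comp_neg]
    simp
  rw [← intervalIntegral.integral_add_adjacent_intervals hneg' hpos, hleft,
    ← intervalIntegral.integral_add hneg hpos, ← intervalIntegral.integral_const_mul,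
    ← intervalIntegral.integral_ofReal]
  rw [intervalIntegral.integral_of_le hT, intervalIntegral.integral_of_le hT]
  refine setIntegral_congr_fun measurableSet_Ioc fun s hs => ?_
  have hsin : Complex.sin (x * s) = (Complex.exp (-(x * s) * Complex.I) -
    Complex.exp (x * s * Complex.I)) * Complex.I / 2 := rfl
  simp only [hg, Real.sign_neg, abs_neg, Real.sign_of_pos hs.1, abs_of_pos hs.1]
  push_cast
  rw [hsin, show Complex.I * x * -(s : ℂ) = -(x * s) * Complex.I by ring,
    show Complex.I * x * (s : ℂ) = x * s * Complex.I by ring]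
  ring



/-- Principal value inversion for `sgn(x)|x|^{-α}`, `0 < α < 2`: with
`f̂(s) = -2i sgn(s)|s|^{α-1} C_α` and `T_n = (2n+1)π/(2|x|)`, for each `x ≠ 0`,
`sgn(x)|x|^{-α} = (1/(2π)) lim_{n→∞} ∫_{-T_n}^{T_n} e^{ixs} f̂(s) ds`. -/
theorem pv_fourier_inversion_sign_rpow (α : ℝ) (hα0 : 0 < α) (hα2 : α < 2)
    (C : ℝ)
    (hC : Filter.Tendsto (fun R : ℝ => ∫ t in (0:ℝ)..R, Real.sin t * t ^ (-α))
      Filter.atTop (nhds C))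
    (x : ℝ) (hx : x ≠ 0) :
    Filter.Tendsto
      (fun n : ℕ => (1 / (2 * (Real.pi : ℂ))) *
        ∫ s in (-((2 * (n : ℝ) + 1) * Real.pi / (2 * |x|)))..((2 * (n : ℝ) + 1) *
            Real.pi / (2 * |x|)),
          Complex.exp (Complex.I * x * s) *
            ((-2 : ℂ) * Complex.I * ((Real.sign s : ℝ) : ℂ) *
              ((|s| ^ (α - 1) : ℝ) : ℂ) * (C : ℂ)))
      Filter.atTop
      (nhds ((Real.sign x * |x| ^ (-α) : ℝ) : ℂ)) := by
  have hC_eq := tendsto_nhds_unique hC (tendsto_integral_sin_mul_rpow_neg hα0 hα2)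
  have hs : Real.sin (Real.pi * (α / 2)) ≠ 0 :=
    (Real.sin_pos_of_pos_of_lt_pi (by have := Real.pi_pos; positivity)
      (by nlinarith [Real.pi_pos])).ne'
  have hΓ : Real.Gamma α ≠ 0 := (Real.Gamma_pos_of_pos hα0).ne'
  have hlim := (tendsto_integral_sin_mul_rpow_half_odd hα0 hα2).const_mul
    (2 / Real.pi * C * (Real.sign x * |x| ^ (-α)))
  have hval : 2 / Real.pi * C * (Real.sign x * |x| ^ (-α)) *
      (Real.Gamma α * Real.sin (Real.pi * (α / 2))) = Real.sign x * |x| ^ (-α) := by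
    rw [hC_eq]
    generalize Real.sin (Real.pi * (α / 2)) = S at hs ⊢
    field_simp
  rw [hval] at hlim
  refine ((Complex.continuous_ofReal.tendsto _).comp hlim).congr fun n => ?_
  have hT : 0 ≤ (2 * (n : ℝ) + 1) * Real.pi / 2 := by positivity
  rw [show (2 * (n : ℝ) + 1) * Real.pi / (2 * |x|) = (2 * (n : ℝ) + 1) * Real.pi / 2 / |x| by
      rw [div_div],
    integral_exp_mul_sign_rpow hα0 C x (by positivity), integral_sin_const_mul_rpow hx hT]
  simp only [Function.comp_apply]
  push_cast
  field_simp
  ring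
end
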